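/- On a probability space, let σ and σ_n (n ∈ ℕ) be stochastic processes indexed by [0,∞) with values in [0,∞) such that, almost surely: each σ_n and σ is non-decreasing, unbounded and right-continuous; σ is strictly increasing; and sup_{0 ≤ s ≤ t} |σ_n(s) − σ(s)| → 0 as n → ∞ for every t ≥ 0. Let V and V_n be nonnegative random variables with V_n → V almost surely. Let L_n = σ_n→ and L = σ→ be the right-continuous inverses and R_n, R the closed ranges of σ_n and σ. Then almost surely: (a) for every y ≥ 0, sup_{0 ≤ x ≤ y} |L_n((x − V_n)_+) − L((x − V)_+)| → 0 as n → ∞; and (b) for every x ≥ 0, ρ(x, V_n + R_n) → ρ(x, V + R) as n → ∞, where V + R := {V + u : u ∈ R}. -/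

import Mathlib

open Set Filter Metric Topology MeasureTheory

/-- `f : ℝ → ℝ` represents a non-decreasing, unbounded, right-continuous function
`[0,∞) → [0,∞)`: it is nonnegative, monotone, unbounded and right-continuous on `[0,∞)`. -/
def IsNDRC (f : ℝ → ℝ) : Prop :=
  (∀ s : ℝ, 0 ≤ s → 0 ≤ f s) ∧ MonotoneOn f (Set.Ici 0) ∧
    (∀ M : ℝ, ∃ s : ℝ, 0 ≤ s ∧ M < f s) ∧
    (∀ s : ℝ, 0 ≤ s → ContinuousWithinAt f (Set.Ici s) s)

/-- The right-continuous inverse `f→(x) = inf {t ≥ 0 : f t > x}`. -/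
noncomputable def rcInv (f : ℝ → ℝ) (x : ℝ) : ℝ :=
  sInf {t : ℝ | 0 ≤ t ∧ x < f t}

/-- The closed range `F = closure {f t : t ≥ 0}`. -/
def crange (f : ℝ → ℝ) : Set ℝ := closure (f '' Set.Ici 0)

/-!
If `|f - g| ≤ ε` on `[0, T]` and `T` is far enough out, then `g→(x) ≤ f→(x + ε)`; applied in both
directions, this squeezes `fₙ→(x)` between `f→(x - ε)` and `f→(x + ε)`. Strict monotonicity of `f`
means that `f→` maps `ℝ` onto `[0, ∞)`, so the monotone function `f→` is continuous, hence uniformly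
continuous on compact sets, and the squeeze is uniform there. For the ranges, monotonicity shows
that values of `f` beyond a time `T` with `x ≤ f T` are no closer to `x` than `f T`, so only the
uniform convergence on the compact interval `[0, T]` matters for the distance from `x`.
-/

section InfDist

lemma infDist_image_add_left {E : Type*} [SeminormedAddCommGroup E] (x v : E) (s : Set E) :
    infDist x ((fun u => v + u) '' s) = infDist (x - v) s := by
  simpa only [add_sub_cancel] using infDist_image (x := x - v) (t := s) (isometry_add_left v)

lemma infDist_image_Ici_eq_infDist_image_Icc {α : Type*} [LinearOrder α] {f : α → ℝ} {a T : α}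
    (hf : MonotoneOn f (Ici a)) (hT : a ≤ T) {z : ℝ} (hz : z ≤ f T) :
    infDist z (f '' Ici a) = infDist z (f '' Icc a T) := by
  have hne : (Icc a T).Nonempty := nonempty_Icc.2 hT
  refine le_antisymm
    (infDist_le_infDist_of_subset (image_mono Icc_subset_Ici_self) (hne.image f)) ?_
  rw [le_infDist (nonempty_Ici.image f)]
  rintro _ ⟨t, ht, rfl⟩
  rcases le_total t T with htT | hTt
  · exact infDist_le_dist_of_mem (mem_image_of_mem f ⟨ht, htT⟩)
  · have hfTt : f T ≤ f t := hf hT ht hTt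
    calc infDist z (f '' Icc a T) ≤ dist z (f T) :=
          infDist_le_dist_of_mem (mem_image_of_mem f (right_mem_Icc.2 hT))
      _ ≤ dist z (f t) := Real.dist_left_le_of_mem_uIcc (mem_uIcc_of_le hz hfTt)

end InfDist

section UniformLimits

variable {ι α β γ : Type*} {l : Filter ι}

lemma tendstoUniformlyOn_comp_of_uniformContinuousOn [UniformSpace β] [UniformSpace γ]
    {F : ι → β → γ} {f : β → γ} {Φ : ι → α → β} {φ : α → β} {s : Set α} {K : Set β}
    (hF : TendstoUniformlyOn F f l K) (hf : UniformContinuousOn f K)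
    (hΦ : TendstoUniformlyOn Φ φ l s) (hΦK : ∀ᶠ i in l, MapsTo (Φ i) s K) (hφK : MapsTo φ s K) :
    TendstoUniformlyOn (fun i x => F i (Φ i x)) (fun x => f (φ x)) l s := by
  have hfΦ : TendstoUniformlyOn (fun i x => f (Φ i x)) (fun x => f (φ x)) l s :=
    hf.comp_tendstoUniformlyOn_eventually hΦK hφK hΦ
  intro u hu
  obtain ⟨v, hv, hvu⟩ := comp_mem_uniformity_sets hu
  filter_upwards [hfΦ v hv, hF v hv, hΦK] with i hfΦi hFi hΦi x hx
  exact hvu ⟨f (Φ i x), hfΦi x hx, hFi _ (hΦi hx)⟩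

lemma tendstoUniformly_max_sub {v : ℝ} {vn : ι → ℝ} (hv : Tendsto vn l (𝓝 v)) (c : ℝ) :
    TendstoUniformly (fun i x => max (x - vn i) c) (fun x => max (x - v) c) l := by
  rw [Metric.tendstoUniformly_iff]
  intro ε hε
  filter_upwards [Metric.tendsto_nhds.1 hv ε hε] with i hi x
  calc dist (max (x - v) c) (max (x - vn i) c)
      ≤ |x - v - (x - vn i)| := abs_max_sub_max_le_abs _ _ _
    _ = dist (vn i) v := by rw [sub_sub_sub_cancel_left, Real.dist_eq]
    _ < ε := hi

variable [PseudoMetricSpace β]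

lemma infDist_image_le_infDist_image_add {f g : α → β} {s : Set α} (hs : s.Nonempty) {ε : ℝ}
    (hfg : ∀ t ∈ s, dist (f t) (g t) ≤ ε) (z : β) :
    infDist z (f '' s) ≤ infDist z (g '' s) + ε := by
  rw [← sub_le_iff_le_add, le_infDist (hs.image g)]
  rintro _ ⟨t, ht, rfl⟩
  rw [sub_le_iff_le_add]
  calc infDist z (f '' s) ≤ dist z (f t) := infDist_le_dist_of_mem (mem_image_of_mem f ht)
    _ ≤ dist z (g t) + dist (f t) (g t) := dist_triangle_right _ _ _
    _ ≤ dist z (g t) + ε := by gcongr; exact hfg t ht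

lemma tendsto_infDist_image_of_tendstoUniformlyOn {F : ι → α → β} {f : α → β} {s : Set α}
    (hs : s.Nonempty) (hF : TendstoUniformlyOn F f l s) {z : β} {zn : ι → β}
    (hz : Tendsto zn l (𝓝 z)) :
    Tendsto (fun i => infDist (zn i) (F i '' s)) l (𝓝 (infDist z (f '' s))) := by
  have hfixed : Tendsto (fun i => infDist z (F i '' s)) l (𝓝 (infDist z (f '' s))) := by
    refine Metric.nhds_basis_closedBall.tendsto_right_iff.2 fun ε hε => ?_
    filter_upwards [Metric.tendstoUniformlyOn_iff.1 hF ε hε] with i hi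
    have hupper := infDist_image_le_infDist_image_add hs
      (fun t ht => (dist_comm _ _).trans_le (hi t ht).le) z
    have hlower := infDist_image_le_infDist_image_add hs (fun t ht => (hi t ht).le) z
    rw [mem_closedBall, Real.dist_eq, abs_le]
    constructor <;> linarith
  refine hfixed.congr_dist (squeeze_zero (fun _ => dist_nonneg) (fun i => ?_)
    (tendsto_iff_dist_tendsto_zero.1 hz))
  rw [dist_comm (zn i)]
  simpa only [NNReal.coe_one, one_mul] using (lipschitz_infDist_pt (F i '' s)).dist_le_mul z (zn i)

end UniformLimits

section RightContinuousInverse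

variable {f g : ℝ → ℝ} {x y t T ε : ℝ}

lemma rcInv_nonneg (f : ℝ → ℝ) (x : ℝ) : 0 ≤ rcInv f x :=
  Real.sInf_nonneg fun _ ht => ht.1

lemma rcInv_le (ht : 0 ≤ t) (hx : x < f t) : rcInv f x ≤ t :=
  csInf_le ⟨0, fun _ hs => hs.1⟩ ⟨ht, hx⟩

lemma le_rcInv (hne : ∃ s, 0 ≤ s ∧ x < f s) (h : ∀ s, 0 ≤ s → x < f s → t ≤ s) :
    t ≤ rcInv f x :=
  le_csInf hne fun s hs => h s hs.1 hs.2

lemma monotone_rcInv (hf : ∀ M, ∃ s, 0 ≤ s ∧ M < f s) : Monotone (rcInv f) := fun _ y hxy =>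
  le_rcInv (hf y) fun _ hs hys => rcInv_le hs (hxy.trans_lt hys)

lemma rcInv_apply_of_strictMonoOn (hf : StrictMonoOn f (Ici 0)) (ht : 0 ≤ t) :
    rcInv f (f t) = t := by
  have hlt {s : ℝ} (hs : t < s) : 0 ≤ s ∧ f t < f s :=
    ⟨ht.trans hs.le, hf ht (ht.trans hs.le) hs⟩
  apply le_antisymm
  · exact le_of_forall_gt_imp_ge_of_dense fun s hs => rcInv_le (hlt hs).1 (hlt hs).2
  · exact le_rcInv ⟨t + 1, hlt (lt_add_one t)⟩ fun s hs hts => ((hf.lt_iff_lt ht hs).1 hts).le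

lemma continuous_rcInv (hf : StrictMonoOn f (Ici 0)) (hf_unbdd : ∀ M, ∃ s, 0 ≤ s ∧ M < f s) :
    Continuous (rcInv f) := by
  have hmono : Monotone (codRestrict (rcInv f) (Ici 0) (rcInv_nonneg f)) := monotone_rcInv hf_unbdd
  have hsurj : Function.Surjective (codRestrict (rcInv f) (Ici 0) (rcInv_nonneg f)) := fun t =>
    ⟨f t, Subtype.ext (rcInv_apply_of_strictMonoOn hf t.2)⟩
  exact continuous_subtype_val.comp (hmono.continuous_of_surjective hsurj)

lemma rcInv_le_rcInv_add (hT : 0 ≤ T) (hxT : x < f T) (hgf : ∀ t ∈ Icc 0 T, g t ≤ f t + ε)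
    (hg : ∃ s, 0 ≤ s ∧ x + ε < g s) : rcInv f x ≤ rcInv g (x + ε) := by
  refine le_rcInv hg fun t ht hxt => ?_
  rcases le_total t T with htT | hTt
  · exact rcInv_le ht (by linarith [hgf t ⟨ht, htT⟩])
  · exact (rcInv_le hT hxT).trans hTt

lemma rcInv_mem_Icc_of_dist_le (hT : 0 ≤ T) (hxT : x + ε < f T)
    (hfg : ∀ t ∈ Icc 0 T, dist (f t) (g t) ≤ ε) (hg : ∃ s, 0 ≤ s ∧ x < g s) :
    rcInv g x ∈ Icc (rcInv f (x - ε)) (rcInv f (x + ε)) := by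
  have hfg' (t : ℝ) (ht : t ∈ Icc 0 T) : -ε ≤ f t - g t ∧ f t - g t ≤ ε := abs_le.1 (hfg t ht)
  have hT_mem : T ∈ Icc 0 T := right_mem_Icc.2 hT
  constructor
  · have hxT' : x - ε < f T := by linarith [hfg' T hT_mem]
    simpa only [sub_add_cancel] using rcInv_le_rcInv_add (ε := ε) hT hxT'
      (fun t ht => by linarith [hfg' t ht]) (by simpa only [sub_add_cancel] using hg)
  · exact rcInv_le_rcInv_add hT (by linarith [hfg' T hT_mem])
      (fun t ht => by linarith [hfg' t ht]) ⟨T, hT, hxT⟩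

end RightContinuousInverse

section Convergence

variable {ι : Type*} {l : Filter ι} {f : ℝ → ℝ} {fn : ι → ℝ → ℝ} {v : ℝ} {vn : ι → ℝ}

lemma tendstoUniformlyOn_rcInv (hf : StrictMonoOn f (Ici 0))
    (hf_unbdd : ∀ M, ∃ s, 0 ≤ s ∧ M < f s) (hfn_unbdd : ∀ i M, ∃ s, 0 ≤ s ∧ M < fn i s)
    (hconv : ∀ t, 0 ≤ t → TendstoUniformlyOn fn f l (Icc 0 t)) (a b : ℝ) :
    TendstoUniformlyOn (fun i => rcInv (fn i)) (rcInv f) l (Icc a b) := by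
  rw [Metric.tendstoUniformlyOn_iff]
  intro η hη
  obtain ⟨δ, hδ, hmod⟩ := Metric.mem_uniformity_dist.1 <|
    isCompact_Icc.uniformContinuousAt_of_continuousAt (s := Icc a b) (rcInv f)
      (fun _ _ => (continuous_rcInv hf hf_unbdd).continuousAt) (Metric.dist_mem_uniformity hη)
  obtain ⟨ε, hε, hεδ⟩ := exists_between hδ
  obtain ⟨T, hT, hbT⟩ := hf_unbdd (b + ε)
  filter_upwards [Metric.tendstoUniformlyOn_iff.1 (hconv T hT) ε hε] with i hi x hx
  have hsqueeze := rcInv_mem_Icc_of_dist_le hT (by linarith [hx.2]) (fun t ht => (hi t ht).le)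
    (hfn_unbdd i x)
  have hlower : dist (rcInv f x) (rcInv f (x - ε)) < η :=
    hmod (by simpa only [dist_self_sub_right, Real.norm_of_nonneg hε.le] using hεδ) hx
  have hupper : dist (rcInv f x) (rcInv f (x + ε)) < η :=
    hmod (by simpa only [dist_self_add_right, Real.norm_of_nonneg hε.le] using hεδ) hx
  rw [Real.dist_eq, abs_lt] at hlower hupper ⊢
  constructor <;> linarith [hsqueeze.1, hsqueeze.2]

lemma tendstoUniformlyOn_rcInv_max_sub (hf : StrictMonoOn f (Ici 0))
    (hf_unbdd : ∀ M, ∃ s, 0 ≤ s ∧ M < f s) (hfn_unbdd : ∀ i M, ∃ s, 0 ≤ s ∧ M < fn i s)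
    (hconv : ∀ t, 0 ≤ t → TendstoUniformlyOn fn f l (Icc 0 t)) (hv : Tendsto vn l (𝓝 v))
    (a b : ℝ) :
    TendstoUniformlyOn (fun i x => rcInv (fn i) (max (x - vn i) 0))
      (fun x => rcInv f (max (x - v) 0)) l (Icc a b) := by
  have hmaps {w : ℝ} (hw : v - 1 < w) :
      MapsTo (fun x => max (x - w) 0) (Icc a b) (Icc 0 (max (b - (v - 1)) 0)) := fun x hx =>
    ⟨le_max_right _ _, max_le_max_right 0 (sub_le_sub hx.2 hw.le)⟩
  exact tendstoUniformlyOn_comp_of_uniformContinuousOn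
    (tendstoUniformlyOn_rcInv hf hf_unbdd hfn_unbdd hconv _ _)
    (isCompact_Icc.uniformContinuousOn_of_continuous (continuous_rcInv hf hf_unbdd).continuousOn)
    (tendstoUniformly_max_sub hv 0).tendstoUniformlyOn
    ((hv.eventually_const_lt (sub_one_lt v)).mono fun _ => hmaps) (hmaps (sub_one_lt v))

lemma tendsto_infDist_image_add_left_crange (hf : MonotoneOn f (Ici 0))
    (hf_unbdd : ∀ M, ∃ s, 0 ≤ s ∧ M < f s) (hfn : ∀ i, MonotoneOn (fn i) (Ici 0))
    (hconv : ∀ t, 0 ≤ t → TendstoUniformlyOn fn f l (Icc 0 t)) (hv : Tendsto vn l (𝓝 v))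
    (x : ℝ) :
    Tendsto (fun i => infDist x ((fun u => vn i + u) '' crange (fn i))) l
      (𝓝 (infDist x ((fun u => v + u) '' crange f))) := by
  simp only [infDist_image_add_left, crange, infDist_closure]
  obtain ⟨T, hT, hxT⟩ := hf_unbdd (x - v)
  have hxv : Tendsto (fun i => x - vn i) l (𝓝 (x - v)) := hv.const_sub x
  have hfnT : Tendsto (fun i => fn i T) l (𝓝 (f T)) :=
    (hconv T hT).tendsto_at (right_mem_Icc.2 hT)
  rw [infDist_image_Ici_eq_infDist_image_Icc hf hT hxT.le]
  have hIcc : Tendsto (fun i => infDist (x - vn i) (fn i '' Icc 0 T)) l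
      (𝓝 (infDist (x - v) (f '' Icc 0 T))) :=
    tendsto_infDist_image_of_tendstoUniformlyOn (nonempty_Icc.2 hT) (hconv T hT) hxv
  refine hIcc.congr' ?_
  filter_upwards [hxv.eventually_lt hfnT hxT] with i hi
  exact (infDist_image_Ici_eq_infDist_image_Icc (hfn i) hT hi.le).symm

end Convergence

theorem stmt7_general {Ω ι : Type*} [MeasurableSpace Ω] (μ : Measure Ω) (l : Filter ι)
    (σ : Ω → ℝ → ℝ) (σn : ι → Ω → ℝ → ℝ) (V : Ω → ℝ) (Vn : ι → Ω → ℝ)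
    (hσ : ∀ᵐ ω ∂μ, StrictMonoOn (σ ω) (Ici 0) ∧ ∀ M, ∃ s, 0 ≤ s ∧ M < σ ω s)
    (hσn : ∀ᵐ ω ∂μ, ∀ i, MonotoneOn (σn i ω) (Ici 0) ∧ ∀ M, ∃ s, 0 ≤ s ∧ M < σn i ω s)
    (hconv : ∀ᵐ ω ∂μ, ∀ t, 0 ≤ t →
      TendstoUniformlyOn (fun i => σn i ω) (σ ω) l (Icc 0 t))
    (hVconv : ∀ᵐ ω ∂μ, Tendsto (fun i => Vn i ω) l (𝓝 (V ω))) :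
    ∀ᵐ ω ∂μ,
      (∀ a b : ℝ, TendstoUniformlyOn (fun i x => rcInv (σn i ω) (max (x - Vn i ω) 0))
        (fun x => rcInv (σ ω) (max (x - V ω) 0)) l (Icc a b)) ∧
      (∀ x : ℝ, Tendsto (fun i => infDist x ((fun u => Vn i ω + u) '' crange (σn i ω))) l
        (𝓝 (infDist x ((fun u => V ω + u) '' crange (σ ω))))) := by
  filter_upwards [hσ, hσn, hconv, hVconv] with ω ⟨hmono, hunbdd⟩ hn hu hv
  exact ⟨tendstoUniformlyOn_rcInv_max_sub hmono hunbdd (fun i => (hn i).2) hu hv,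
    tendsto_infDist_image_add_left_crange hmono.monotoneOn hunbdd (fun i => (hn i).1) hu hv⟩

/-- On a probability space, let `σ` and `σn` be processes which are,
almost surely, non-decreasing, unbounded and right-continuous on `[0,∞)`, with `σ` strictly
increasing and `σn → σ` locally uniformly.  Let `Vn → V` a.s. be nonnegative random
variables, `Ln`, `L` the right-continuous inverses and `Rn`, `R` the closed ranges of `σn`,
`σ`.  Then almost surely: (a) for every `y ≥ 0`,
`sup_{0 ≤ x ≤ y} |Ln((x − Vn)₊) − L((x − V)₊)| → 0`; and (b) for every `x ≥ 0`,
`ρ(x, Vn + Rn) → ρ(x, V + R)`. -/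
theorem stmt7 {Ω : Type*} [MeasurableSpace Ω] (μ : Measure Ω) [IsProbabilityMeasure μ]
    (σ : Ω → ℝ → ℝ) (σn : ℕ → Ω → ℝ → ℝ) (V : Ω → ℝ) (Vn : ℕ → Ω → ℝ)
    (hmeasσ : ∀ t : ℝ, Measurable fun ω => σ ω t)
    (hmeasσn : ∀ (n : ℕ) (t : ℝ), Measurable fun ω => σn n ω t)
    (hmeasV : Measurable V) (hmeasVn : ∀ n, Measurable (Vn n))
    (hVpos : ∀ ω, 0 ≤ V ω) (hVnpos : ∀ n ω, 0 ≤ Vn n ω)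
    (has : ∀ᵐ ω ∂μ, IsNDRC (σ ω) ∧ (∀ n, IsNDRC (σn n ω)) ∧
      StrictMonoOn (σ ω) (Set.Ici 0) ∧
      (∀ t : ℝ, 0 ≤ t → TendstoUniformlyOn (fun n => σn n ω) (σ ω) atTop (Set.Icc 0 t)))
    (hVconv : ∀ᵐ ω ∂μ, Tendsto (fun n => Vn n ω) atTop (𝓝 (V ω))) :
    ∀ᵐ ω ∂μ,
      (∀ y : ℝ, 0 ≤ y →
        TendstoUniformlyOn (fun n x => rcInv (σn n ω) (max (x - Vn n ω) 0))
          (fun x => rcInv (σ ω) (max (x - V ω) 0)) atTop (Set.Icc 0 y)) ∧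
      (∀ x : ℝ, 0 ≤ x →
        Tendsto (fun n => Metric.infDist x ((fun u => Vn n ω + u) '' crange (σn n ω)))
          atTop (𝓝 (Metric.infDist x ((fun u => V ω + u) '' crange (σ ω))))) := by
  have general := stmt7_general μ atTop σ σn V Vn (has.mono fun _ h => ⟨h.2.2.1, h.1.2.2.1⟩)
    (has.mono fun _ h i => ⟨(h.2.1 i).2.1, (h.2.1 i).2.2.1⟩) (has.mono fun _ h => h.2.2.2) hVconv
  exact general.mono fun _ h => ⟨fun y _ => h.1 0 y, fun x _ => h.2 x⟩
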